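/- Let a = 2π/(ln 2 − γ), where γ is the Euler–Mascheroni constant, let c < 0 and θ₀ ∈ ℝ with θ₀ ≠ 0. Then there exist C > 0 and ε₀ > 0 such that for all 0 < ε < ε₀ the equation {a + cε + (θ₀(a+cε) − ε²)·(Log z/(4π) − i/4 − 1/a)}·{θ₀ + (θ₀(a+cε) − ε²)·(Log(1−z)/(4π) − 1/a)} − ε² = 0, with Log the principal complex logarithm, has a solution E_ε^r with Im(E_ε^r) < 0 satisfying |Re(E_ε^r) − 4π|c|ε/a²| ≤ Cε², and for every δ > 0 there is ε₁ > 0 such that for 0 < ε < ε₁, |Im(E_ε^r) + 16π³ε²/(a²θ₀²·(ln ε)²)| ≤ δ·ε²/(ln ε)². -/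

import Mathlib

open Complex

/-!
The second factor of the denominator is a logarithm of `1 - E`, so it is linear in the exponent `s`
of `E = 1 - exp s`.  Choosing `s` so that this factor equals `ε * p` turns the resonance equation
into `p * F = ε`, where `F` is the first factor.  As `E / ε` tends to `4π|c|/a² > 0`, splitting
`log E = log ε + log (E / ε)` shows `F = x + H` with `x ~ (θ₀ a / 4π) log ε` real and
`Im H → -θ₀ a / 4`.  Hence `p ↦ ε / F` maps a fixed disc into a shrinking one and is a contraction
there by the Schwarz lemma, and its fixed point has `Im p ~ -ε Im H / x²`.  Only this imaginary part
makes `E` nonreal, which gives the width of the resonance.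
-/

open Filter Topology Asymptotics Metric Function

section FixedPoint

variable {E : Type*} [NormedAddCommGroup E] [NormedSpace ℂ E] [CompleteSpace E]

lemma exists_isFixedPt_of_mapsTo_ball {f : E → E} {c : E} {r : ℝ} (hr : 0 < r)
    (hd : DifferentiableOn ℂ f (ball c (4 * r)))
    (hf : Set.MapsTo f (ball c (4 * r)) (closedBall c (r / 2))) :
    ∃ z ∈ closedBall c r, IsFixedPt f z := by
  have hmaps : Set.MapsTo f (closedBall c r) (closedBall c r) :=
    hf.mono (closedBall_subset_ball (by linarith)) (closedBall_subset_closedBall (by linarith))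
  have hlip : LipschitzOnWith (1 / 3) f (closedBall c r) := by
    refine LipschitzOnWith.of_dist_le_mul fun z hz w hw ↦ ?_
    have hsub : ball w (3 * r) ⊆ ball c (4 * r) :=
      ball_subset_ball' (by linarith [mem_closedBall.1 hw])
    have hfw : f w ∈ closedBall c (r / 2) := hf (hsub (mem_ball_self (by positivity)))
    have hball : Set.MapsTo f (ball w (3 * r)) (closedBall (f w) r) := fun y hy ↦
      mem_closedBall.2 <| by
        linarith [dist_triangle_right (f y) (f w) c, mem_closedBall.1 (hf (hsub hy)),
          mem_closedBall.1 hfw]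
    have hzw : z ∈ ball w (3 * r) := mem_ball.2 <| by
      linarith [dist_triangle_right z w c, mem_closedBall.1 hz, mem_closedBall.1 hw]
    convert dist_le_div_mul_dist_of_mapsTo_ball (hd.mono hsub) hball hzw using 2
    simp [field]
  obtain ⟨z, hz, hfz, -⟩ := ContractingWith.exists_fixedPoint' (K := 1 / 3)
    isClosed_closedBall.isComplete hmaps
    ⟨by rw [← NNReal.coe_lt_coe]; norm_num, hlip.mapsToRestrict hmaps⟩
    (mem_closedBall_self hr.le) (edist_ne_top _ _)
  exact ⟨z, hz, hfz⟩

lemma exists_tendsto_isFixedPt {α : Type*} {l : Filter α} {g : α → E → E} {b : α → ℝ} {c : E}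
    (hb : Tendsto b l (𝓝 0))
    (hd : ∀ᶠ x in l ×ˢ 𝓝 c, DifferentiableAt ℂ (g x.1) x.2)
    (hg : ∀ᶠ x in l ×ˢ 𝓝 c, dist (g x.1 x.2) c ≤ b x.1) :
    ∃ p : α → E, Tendsto p l (𝓝 c) ∧ ∀ᶠ t in l, IsFixedPt (g t) (p t) := by
  obtain ⟨P, hP, Q, hQ, hPQ⟩ := eventually_prod_iff.1 (hd.and hg)
  obtain ⟨R, hR, hRQ⟩ := eventually_nhds_iff_ball.1 hQ
  have hfix : ∀ᶠ t in l, ∃ z, IsFixedPt (g t) z ∧ dist z c ≤ b t := by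
    filter_upwards [hP, hb.eventually_le_const (show 0 < R / 8 by positivity)] with t ht hbt
    have hR4 : ball c (4 * (R / 4)) = ball c R := by ring_nf
    obtain ⟨z, hz, hgz⟩ := exists_isFixedPt_of_mapsTo_ball (f := g t) (c := c) (r := R / 4)
      (by positivity)
      (fun y hy ↦ (hPQ ht (hRQ y (hR4 ▸ hy))).1.differentiableWithinAt)
      (fun y hy ↦ mem_closedBall.2 <| by linarith [(hPQ ht (hRQ y (hR4 ▸ hy))).2])
    refine ⟨z, hgz, ?_⟩
    simpa only [hgz.eq] using
      (hPQ ht (hRQ z (closedBall_subset_ball (by linarith) hz))).2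
  obtain ⟨p, hp⟩ := skolem.1 hfix
  exact ⟨p, tendsto_iff_dist_tendsto_zero.2 <|
    squeeze_zero' (.of_forall fun _ ↦ dist_nonneg) (hp.mono fun _ h ↦ h.2) hb,
    hp.mono fun _ h ↦ h.1⟩

end FixedPoint

section Asymptotics

lemma nhdsGT_prod_nhds_le {X Y : Type*} [TopologicalSpace X] [Preorder X] [TopologicalSpace Y]
    (x : X) (y : Y) : 𝓝[>] x ×ˢ 𝓝 y ≤ 𝓝 (x, y) :=
  (prod_mono nhdsWithin_le_nhds le_rfl).trans nhds_prod_eq.ge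

lemma isEquivalent_exp_im : (fun z : ℂ ↦ (exp z).im) ~[𝓝 0] Complex.im := by
  have hexp : (fun z : ℂ ↦ Real.exp z.re) ~[𝓝 0] fun _ ↦ (1 : ℝ) :=
    (isEquivalent_const_iff_tendsto one_ne_zero).2 <| by
      simpa using (show Continuous fun z : ℂ ↦ Real.exp z.re by fun_prop).tendsto 0
  have hsin : (fun z : ℂ ↦ Real.sin z.im) ~[𝓝 0] Complex.im :=
    Real.isEquivalent_sin.comp_tendsto (continuous_im.tendsto 0)
  refine ((hexp.mul hsin).congr_left ?_).congr_right ?_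
  · exact .of_forall fun z ↦ (exp_im z).symm
  · exact .of_forall fun z ↦ one_mul z.im

lemma isBigO_exp_sub_one_sub_id : (fun z : ℂ ↦ exp z - 1 - z) =O[𝓝 0] fun z ↦ z ^ 2 := by
  simpa [Finset.sum_range_succ, sub_sub] using exp_sub_sum_range_isBigO_pow 2

lemma isEquivalent_im_inv_ofReal_add {α : Type*} {l : Filter α} {x : α → ℝ} {H : α → ℂ} {h : ℂ}
    (hx : Tendsto (fun t ↦ |x t|) l atTop) (hH : Tendsto H l (𝓝 h)) (hh : h.im ≠ 0) :
    (fun t ↦ ((x t + H t : ℂ)⁻¹).im) ~[l] fun t ↦ -h.im / x t ^ 2 := by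
  have him : (fun t ↦ -(H t).im) ~[l] fun _ ↦ -h.im :=
    (isEquivalent_const_iff_tendsto (neg_ne_zero.2 hh)).2 ((continuous_im.tendsto h).comp hH).neg
  have hre : (fun t ↦ x t + (H t).re) ~[l] x :=
    IsEquivalent.refl.add_isLittleO <| ((continuous_re.tendsto h).comp hH).isBigO_one ℝ
      |>.trans_isLittleO <| isLittleO_const_left.2 <| .inr hx
  have hnormSq : (fun t ↦ normSq (x t + H t)) ~[l] fun t ↦ x t ^ 2 := by
    have hsq : Tendsto (fun t ↦ ‖x t ^ 2‖) l atTop := by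
      simpa [Function.comp_def] using (tendsto_pow_atTop two_ne_zero).comp hx
    have him_sq : (fun t ↦ (H t).im ^ 2) =o[l] fun t ↦ x t ^ 2 :=
      (((continuous_im.tendsto h).comp hH).pow 2).isBigO_one ℝ
        |>.trans_isLittleO <| isLittleO_const_left.2 <| .inr hsq
    refine ((hre.pow 2).add_isLittleO him_sq).congr_left (.of_forall fun t ↦ ?_)
    simp [normSq_apply, sq]
  refine (him.div hnormSq).congr_left (.of_forall fun t ↦ ?_)
  simp [inv_im]

end Asymptotics

/-- The determinant `θ₀ (a + c ε) - ε²` of the matrix of point-interaction parameters. -/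
def couplingDet (a c θ ε : ℝ) : ℝ := θ * (a + c * ε) - ε ^ 2

/-- The diagonal entry of the resolvent denominator in the channel with threshold `0`, continued
across the positive real axis. -/
noncomputable def openChannel (a c θ ε : ℝ) (z : ℂ) : ℂ :=
  ((a + c * ε : ℝ) : ℂ) +
    (couplingDet a c θ ε : ℂ) * (log z / (4 * Real.pi) - I / 4 - ((1 / a : ℝ) : ℂ))

/-- The diagonal entry of the resolvent denominator in the channel with threshold `1`. -/
noncomputable def closedChannel (a c θ ε : ℝ) (z : ℂ) : ℂ :=
  (θ : ℂ) + (couplingDet a c θ ε : ℂ) * (log (1 - z) / (4 * Real.pi) - ((1 / a : ℝ) : ℂ))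

/-- The value of `ε⁻¹ log (1 - z)` at the energy `z` where `closedChannel` equals `ε * p`. -/
noncomputable def channelExponent (a c θ ε : ℝ) (p : ℂ) : ℂ :=
  ((4 * Real.pi / couplingDet a c θ ε : ℝ) : ℂ) * (((θ * c - ε) / a : ℝ) + p)

/-- The energy `z` at which `closedChannel` equals `ε * p`. -/
noncomputable def channelEnergy (a c θ ε : ℝ) (p : ℂ) : ℂ :=
  1 - exp (ε * channelExponent a c θ ε p)

/-- The first-order coefficient in `ε` of the resonance energy. -/
noncomputable def energySlope (a c : ℝ) : ℝ := -(4 * Real.pi * c / a ^ 2)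

section Resonance

variable {a c θ : ℝ}

lemma continuous_couplingDet : Continuous (couplingDet a c θ) := by
  unfold couplingDet
  fun_prop

lemma couplingDet_zero : couplingDet a c θ 0 = θ * a := by simp [couplingDet]

lemma tendsto_couplingDet : Tendsto (couplingDet a c θ) (𝓝[>] 0) (𝓝 (θ * a)) :=
  couplingDet_zero (c := c) ▸ continuous_couplingDet.continuousWithinAt

lemma energySlope_pos (ha : a ≠ 0) (hc : c < 0) : 0 < energySlope a c := by
  rw [energySlope, neg_pos]
  exact div_neg_of_neg_of_pos (mul_neg_of_pos_of_neg (by positivity) hc) (by positivity)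

lemma channelExponent_zero (ha : a ≠ 0) (hθ : θ ≠ 0) :
    channelExponent a c θ 0 0 = -(energySlope a c : ℂ) := by
  rw [channelExponent, energySlope, couplingDet_zero]
  have ha' : (a : ℂ) ≠ 0 := ofReal_ne_zero.2 ha
  have hθ' : (θ : ℂ) ≠ 0 := ofReal_ne_zero.2 hθ
  push_cast
  field_simp
  ring

lemma channelExponent_im (ε : ℝ) (p : ℂ) :
    (channelExponent a c θ ε p).im = 4 * Real.pi / couplingDet a c θ ε * p.im := by
  rw [channelExponent, im_ofReal_mul, add_im, ofReal_im, zero_add]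

lemma differentiableAt_channelExponent (ha : a ≠ 0) (hθ : θ ≠ 0) :
    DifferentiableAt ℝ (fun x : ℝ × ℂ ↦ channelExponent a c θ x.1 x.2) 0 := by
  have hdet : θ * (a + c * (0 : ℝ × ℂ).1) - (0 : ℝ × ℂ).1 ^ 2 ≠ 0 := by simp [hθ, ha]
  have : Differentiable ℝ ((↑) : ℝ → ℂ) := ofRealCLM.differentiable
  unfold channelExponent couplingDet
  fun_prop (disch := assumption)

lemma closedChannel_channelEnergy {ε : ℝ} {p : ℂ} (ha : a ≠ 0) (hK : couplingDet a c θ ε ≠ 0)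
    (him : |(ε * channelExponent a c θ ε p).im| < Real.pi) :
    closedChannel a c θ ε (channelEnergy a c θ ε p) = ε * p := by
  have hlog : log (1 - channelEnergy a c θ ε p) = ε * channelExponent a c θ ε p := by
    rw [channelEnergy, sub_sub_cancel, log_exp (neg_lt_of_abs_lt him) (le_of_abs_le him.le)]
  have hK' : (couplingDet a c θ ε : ℂ) ≠ 0 := ofReal_ne_zero.2 hK
  have ha' : (a : ℂ) ≠ 0 := ofReal_ne_zero.2 ha
  have hpi : (Real.pi : ℂ) ≠ 0 := ofReal_ne_zero.2 Real.pi_ne_zero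
  have hdet : (couplingDet a c θ ε : ℂ) = θ * (a + c * ε) - ε ^ 2 := by simp [couplingDet]
  rw [closedChannel, hlog, channelExponent]
  push_cast
  field_simp
  linear_combination -hdet

lemma openChannel_eq_log_add {ε : ℝ} {z : ℂ} (hε : 0 < ε) (hz : z ≠ 0) :
    openChannel a c θ ε z =
      (couplingDet a c θ ε / (4 * Real.pi) * Real.log ε : ℝ) + openChannel a c θ ε (z / ε) := by
  have hε' : (ε : ℂ) ≠ 0 := ofReal_ne_zero.2 hε.ne'
  have hlog : log z = Real.log ε + log (z / ε) := by
    rw [← log_ofReal_mul hε (div_ne_zero hz hε'), mul_div_cancel₀ _ hε']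
  simp only [openChannel, hlog]
  push_cast
  ring

lemma continuousAt_openChannel {z : ℂ} (hz : z ∈ slitPlane) (ε : ℝ) :
    ContinuousAt (fun x : ℝ × ℂ ↦ openChannel a c θ x.1 x.2) (ε, z) := by
  have hlog : ContinuousAt (fun x : ℝ × ℂ ↦ log x.2) (ε, z) := continuousAt_snd.clog hz
  have hdet : Continuous (couplingDet a c θ) := continuous_couplingDet
  unfold openChannel
  fun_prop

lemma openChannel_ofReal_im {w : ℝ} (hw : 0 < w) (ε : ℝ) :
    (openChannel a c θ ε w).im = -(couplingDet a c θ ε / 4) := by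
  have hlog : log w / (4 * Real.pi) = ((Real.log w / (4 * Real.pi) : ℝ) : ℂ) := by
    push_cast [ofReal_log hw.le]
    rfl
  simp [openChannel, hlog, -ofReal_div]
  ring

lemma isBigO_mul_channelExponent (ha : a ≠ 0) (hθ : θ ≠ 0) :
    (fun x : ℝ × ℂ ↦ x.1 * channelExponent a c θ x.1 x.2) =O[𝓝 0] Prod.fst := by
  have hT : (fun x : ℝ × ℂ ↦ channelExponent a c θ x.1 x.2) =O[𝓝 0] fun _ ↦ (1 : ℝ) :=
    (differentiableAt_channelExponent ha hθ).continuousAt.tendsto.isBigO_one ℝ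
  simpa using (isBigO_ofReal_left.2 (isBigO_refl (Prod.fst : ℝ × ℂ → ℝ) _)).mul hT

lemma tendsto_mul_channelExponent (ha : a ≠ 0) (hθ : θ ≠ 0) :
    Tendsto (fun x : ℝ × ℂ ↦ x.1 * channelExponent a c θ x.1 x.2) (𝓝 0) (𝓝 0) :=
  (isBigO_mul_channelExponent ha hθ).trans_tendsto (continuous_fst.tendsto 0)

lemma isBigO_channelEnergy_sub (ha : a ≠ 0) (hθ : θ ≠ 0) :
    (fun x : ℝ × ℂ ↦ channelEnergy a c θ x.1 x.2 - energySlope a c * x.1) =O[𝓝 0]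
      fun x ↦ x.1 * ‖x‖ := by
  have hs := isBigO_mul_channelExponent (c := c) ha hθ
  have hquad : (fun x : ℝ × ℂ ↦ exp (x.1 * channelExponent a c θ x.1 x.2) - 1
      - x.1 * channelExponent a c θ x.1 x.2) =O[𝓝 0] fun x ↦ x.1 * ‖x‖ := by
    refine ((isBigO_exp_sub_one_sub_id.comp_tendsto
      (tendsto_mul_channelExponent ha hθ)).trans (hs.pow 2)).trans ?_
    simpa only [sq] using (isBigO_refl _ _).mul isBigO_fst_prod.norm_right
  have hlin : (fun x : ℝ × ℂ ↦ x.1 * (channelExponent a c θ x.1 x.2 + energySlope a c)) =O[𝓝 0]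
      fun x ↦ x.1 * ‖x‖ := by
    refine (isBigO_ofReal_left.2 (isBigO_refl _ _)).mul (IsBigO.norm_right ?_)
    simpa [channelExponent_zero ha hθ] using
      (differentiableAt_channelExponent (c := c) ha hθ).isBigO_sub
  refine (hquad.add hlin).neg_left.congr_left fun x ↦ ?_
  rw [channelEnergy]
  ring

lemma tendsto_channelEnergy_div (ha : a ≠ 0) (hθ : θ ≠ 0) :
    Tendsto (fun x : ℝ × ℂ ↦ channelEnergy a c θ x.1 x.2 / x.1) (𝓝[>] 0 ×ˢ 𝓝 0)
      (𝓝 (energySlope a c)) := by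
  have hpos : ∀ᶠ x in 𝓝[>] (0 : ℝ) ×ˢ 𝓝 (0 : ℂ), 0 < x.1 :=
    tendsto_fst.eventually self_mem_nhdsWithin
  have hO : (fun x : ℝ × ℂ ↦ channelEnergy a c θ x.1 x.2 / x.1 - energySlope a c)
      =O[𝓝[>] 0 ×ˢ 𝓝 0] fun x ↦ ‖x‖ := by
    have hinv : (fun x : ℝ × ℂ ↦ (x.1 : ℂ)⁻¹) =O[𝓝[>] 0 ×ˢ 𝓝 0] fun x ↦ x.1⁻¹ := by
      simpa using isBigO_ofReal_left.2 (isBigO_refl (fun x : ℝ × ℂ ↦ x.1⁻¹) _)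
    have hsub := (isBigO_channelEnergy_sub (c := c) ha hθ).mono (nhdsGT_prod_nhds_le 0 0)
    refine (hsub.mul hinv).congr' ?_ ?_
    · filter_upwards [hpos] with x hx
      have hx' : (x.1 : ℂ) ≠ 0 := ofReal_ne_zero.2 hx.ne'
      field_simp
    · filter_upwards [hpos] with x hx
      field_simp
  exact tendsto_sub_nhds_zero_iff.1 <| hO.trans_tendsto <|
    tendsto_norm_zero.mono_left (nhdsGT_prod_nhds_le 0 0)

lemma tendsto_openChannel_channelEnergy_div (ha : a ≠ 0) (hθ : θ ≠ 0) (hc : c < 0) :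
    Tendsto (fun x : ℝ × ℂ ↦ openChannel a c θ x.1 (channelEnergy a c θ x.1 x.2 / x.1))
      (𝓝[>] 0 ×ˢ 𝓝 0) (𝓝 (openChannel a c θ 0 (energySlope a c))) := by
  have hslit : (energySlope a c : ℂ) ∈ slitPlane := ofReal_mem_slitPlane.2 (energySlope_pos ha hc)
  have hpair : Tendsto (fun x : ℝ × ℂ ↦ (x.1, channelEnergy a c θ x.1 x.2 / x.1))
      (𝓝[>] 0 ×ˢ 𝓝 0) (𝓝 (0, (energySlope a c : ℂ))) :=
    (tendsto_fst.mono_right nhdsWithin_le_nhds).prodMk_nhds (tendsto_channelEnergy_div ha hθ)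
  have hcont : Tendsto (fun x : ℝ × ℂ ↦ openChannel a c θ x.1 x.2) (𝓝 (0, ↑(energySlope a c)))
      (𝓝 (openChannel a c θ 0 (energySlope a c))) := continuousAt_openChannel hslit 0
  simpa only [Function.comp_def] using hcont.comp hpair

lemma eventually_channelEnergy_div_mem_slitPlane (ha : a ≠ 0) (hθ : θ ≠ 0) (hc : c < 0) :
    ∀ᶠ x : ℝ × ℂ in 𝓝[>] 0 ×ˢ 𝓝 0, channelEnergy a c θ x.1 x.2 / x.1 ∈ slitPlane :=
  (tendsto_channelEnergy_div ha hθ).eventually_mem <| isOpen_slitPlane.mem_nhds <|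
    ofReal_mem_slitPlane.2 (energySlope_pos ha hc)

/-- The value of `openChannel` at `channelEnergy`, with the real divergent part of the logarithm
split off as in `openChannel_eq_log_add`. -/
noncomputable def openChannelValue (a c θ ε : ℝ) (p : ℂ) : ℂ :=
  (couplingDet a c θ ε / (4 * Real.pi) * Real.log ε : ℝ) +
    openChannel a c θ ε (channelEnergy a c θ ε p / ε)

lemma tendsto_abs_couplingDet_mul_log (ha : a ≠ 0) (hθ : θ ≠ 0) :
    Tendsto (fun ε ↦ |couplingDet a c θ ε / (4 * Real.pi) * Real.log ε|) (𝓝[>] 0) atTop := by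
  simp only [abs_mul]
  refine Tendsto.pos_mul_atTop ?_ (tendsto_couplingDet.div_const (4 * Real.pi)).abs
    (tendsto_abs_atBot_atTop.comp Real.tendsto_log_nhdsGT_zero)
  positivity

lemma eventually_one_le_norm_openChannelValue (ha : a ≠ 0) (hθ : θ ≠ 0) (hc : c < 0) :
    ∀ᶠ x : ℝ × ℂ in 𝓝[>] 0 ×ˢ 𝓝 0, 1 ≤ ‖openChannelValue a c θ x.1 x.2‖ := by
  have hH := (tendsto_openChannel_channelEnergy_div ha hθ hc).norm
  have hlog := (tendsto_abs_couplingDet_mul_log (c := c) ha hθ).comp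
    (tendsto_fst (f := 𝓝[>] (0 : ℝ)) (g := 𝓝 (0 : ℂ)))
  filter_upwards [(hlog.atTop_add hH.neg).eventually_ge_atTop 1] with x hx
  have htri := norm_sub_le_norm_add
    ((couplingDet a c θ x.1 / (4 * Real.pi) * Real.log x.1 : ℝ) : ℂ)
    (openChannel a c θ x.1 (channelEnergy a c θ x.1 x.2 / x.1))
  rw [norm_real, Real.norm_eq_abs] at htri
  exact hx.trans htri

lemma differentiableAt_openChannelValue {ε : ℝ} {p : ℂ}
    (hz : channelEnergy a c θ ε p / ε ∈ slitPlane) :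
    DifferentiableAt ℂ (openChannelValue a c θ ε) p := by
  have hlog : DifferentiableAt ℂ (fun p ↦ log (channelEnergy a c θ ε p / ε)) p := by
    refine DifferentiableAt.clog ?_ hz
    unfold channelEnergy channelExponent
    fun_prop
  unfold openChannelValue openChannel
  fun_prop

lemma exists_tendsto_eq_div_openChannelValue (ha : a ≠ 0) (hθ : θ ≠ 0) (hc : c < 0) :
    ∃ p : ℝ → ℂ, Tendsto p (𝓝[>] 0) (𝓝 0) ∧
      ∀ᶠ ε in 𝓝[>] 0, p ε = ε / openChannelValue a c θ ε (p ε) := by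
  have hle : ∀ᶠ x : ℝ × ℂ in 𝓝[>] 0 ×ˢ 𝓝 0, 1 ≤ ‖openChannelValue a c θ x.1 x.2‖ :=
    eventually_one_le_norm_openChannelValue ha hθ hc
  obtain ⟨p, hp, hfix⟩ := exists_tendsto_isFixedPt (l := 𝓝[>] (0 : ℝ)) (c := (0 : ℂ))
    (g := fun ε p ↦ ε / openChannelValue a c θ ε p) (b := fun ε ↦ |ε|)
    ((continuous_abs.tendsto' 0 0 abs_zero).mono_left nhdsWithin_le_nhds)
    (by
      filter_upwards [hle, eventually_channelEnergy_div_mem_slitPlane ha hθ hc] with x hx hslit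
      exact (differentiableAt_const _).fun_div (differentiableAt_openChannelValue hslit)
        (norm_pos_iff.1 (one_pos.trans_le hx)))
    (by
      filter_upwards [hle] with x hx
      simpa using div_le_self (abs_nonneg x.1) hx)
  exact ⟨p, hp, hfix.mono fun _ h ↦ h.symm⟩

/-! ### Asymptotics along a solution -/

variable {p : ℝ → ℂ}

lemma eventually_resonance_equation (ha : a ≠ 0) (hθ : θ ≠ 0) (hc : c < 0)
    (hp : Tendsto p (𝓝[>] 0) (𝓝 0))
    (hpF : ∀ᶠ ε in 𝓝[>] 0, p ε = ε / openChannelValue a c θ ε (p ε)) :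
    ∀ᶠ ε : ℝ in 𝓝[>] 0, openChannel a c θ ε (channelEnergy a c θ ε (p ε)) *
      closedChannel a c θ ε (channelEnergy a c θ ε (p ε)) - (ε : ℂ) ^ 2 = 0 := by
  have hpath : Tendsto (fun ε ↦ (ε, p ε)) (𝓝[>] 0) (𝓝[>] 0 ×ˢ 𝓝 0) := tendsto_id.prodMk hp
  have him0 : Tendsto (fun ε : ℝ ↦ |(ε * channelExponent a c θ ε (p ε)).im|) (𝓝[>] 0) (𝓝 0) := by
    simpa [Function.comp_def] using ((continuous_abs.comp continuous_im).tendsto 0).comp <|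
      (tendsto_mul_channelExponent (c := c) ha hθ).comp
        (hpath.mono_right (nhdsGT_prod_nhds_le 0 0))
  filter_upwards [hpF, self_mem_nhdsWithin,
    hpath.eventually (eventually_one_le_norm_openChannelValue ha hθ hc),
    hpath.eventually (eventually_channelEnergy_div_mem_slitPlane ha hθ hc),
    tendsto_couplingDet.eventually_ne (mul_ne_zero hθ ha),
    him0.eventually_lt_const Real.pi_pos] with
    ε hpε hε hF hslit hK him
  have hz : channelEnergy a c θ ε (p ε) ≠ 0 :=
    fun h ↦ slitPlane_ne_zero hslit (by rw [h, zero_div])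
  have hopen : openChannel a c θ ε (channelEnergy a c θ ε (p ε)) =
      openChannelValue a c θ ε (p ε) := openChannel_eq_log_add hε hz
  have hmul : openChannelValue a c θ ε (p ε) * p ε = ε := by
    rw [mul_comm, ← eq_div_iff (norm_pos_iff.1 (one_pos.trans_le hF))]
    exact hpε
  rw [hopen, closedChannel_channelEnergy ha hK him]
  linear_combination (ε : ℂ) * hmul

lemma isBigO_channelEnergy_sub_of_eq_div (ha : a ≠ 0) (hθ : θ ≠ 0) (hc : c < 0)
    (hp : Tendsto p (𝓝[>] 0) (𝓝 0))
    (hpF : ∀ᶠ ε in 𝓝[>] 0, p ε = ε / openChannelValue a c θ ε (p ε)) :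
    (fun ε : ℝ ↦ channelEnergy a c θ ε (p ε) - energySlope a c * ε) =O[𝓝[>] 0]
      fun ε ↦ ε ^ 2 := by
  have hpath : Tendsto (fun ε ↦ (ε, p ε)) (𝓝[>] 0) (𝓝[>] 0 ×ˢ 𝓝 0) := tendsto_id.prodMk hp
  have hpO : p =O[𝓝[>] 0] fun ε ↦ ε := by
    refine .of_bound 1 ?_
    filter_upwards [hpF, hpath.eventually (eventually_one_le_norm_openChannelValue ha hθ hc)]
      with ε hpε hF
    rw [hpε, norm_div, norm_real, one_mul]
    exact div_le_self (norm_nonneg ε) hF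
  have hpathO : (fun ε ↦ ‖(ε, p ε)‖) =O[𝓝[>] 0] fun ε ↦ ε :=
    ((isBigO_refl _ _).prod_left hpO).norm_left
  refine ((isBigO_channelEnergy_sub ha hθ).comp_tendsto
    (hpath.mono_right (nhdsGT_prod_nhds_le 0 0))).trans ?_
  simpa only [sq, Function.comp_def] using (isBigO_refl (fun ε : ℝ ↦ ε) _).mul hpathO

lemma isEquivalent_im_of_eq_div (ha : a ≠ 0) (hθ : θ ≠ 0) (hc : c < 0)
    (hp : Tendsto p (𝓝[>] 0) (𝓝 0))
    (hpF : ∀ᶠ ε in 𝓝[>] 0, p ε = ε / openChannelValue a c θ ε (p ε)) :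
    (fun ε ↦ (p ε).im) ~[𝓝[>] 0]
      fun ε ↦ 4 * Real.pi ^ 2 / (θ * a) * (ε / Real.log ε ^ 2) := by
  have him : -(openChannel a c θ 0 (energySlope a c)).im = θ * a / 4 := by
    rw [openChannel_ofReal_im (energySlope_pos ha hc), couplingDet_zero, neg_neg]
  have hinv := isEquivalent_im_inv_ofReal_add (tendsto_abs_couplingDet_mul_log (c := c) ha hθ)
    ((tendsto_openChannel_channelEnergy_div ha hθ hc).comp (tendsto_id.prodMk hp))
    (neg_ne_zero.1 <| him ▸ by positivity)
  rw [him] at hinv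
  have hcoeff : (fun ε ↦ θ * a / 4 / (couplingDet a c θ ε / (4 * Real.pi)) ^ 2) ~[𝓝[>] 0]
      fun _ ↦ 4 * Real.pi ^ 2 / (θ * a) := by
    refine (isEquivalent_const_iff_tendsto (by positivity)).2 ?_
    have hlim : θ * a / 4 / (θ * a / (4 * Real.pi)) ^ 2 = 4 * Real.pi ^ 2 / (θ * a) := by
      field
    exact hlim ▸ tendsto_const_nhds.div
      ((tendsto_couplingDet.div_const (4 * Real.pi)).pow 2) (by positivity)
  have hscale := hcoeff.mul (IsEquivalent.refl (u := fun ε ↦ ε / Real.log ε ^ 2))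
  refine IsEquivalent.trans ?_ hscale
  refine ((IsEquivalent.refl (u := fun ε : ℝ ↦ ε)).mul hinv |>.congr_left ?_).congr_right ?_
  · filter_upwards [hpF] with ε hpε
    rw [hpε, div_eq_mul_inv, im_ofReal_mul]
    rfl
  · refine .of_forall fun ε ↦ ?_
    simp only [Pi.mul_apply, mul_pow]
    ring

lemma isEquivalent_channelEnergy_im (ha : a ≠ 0) (hθ : θ ≠ 0) (hp : Tendsto p (𝓝[>] 0) (𝓝 0)) :
    (fun ε ↦ (channelEnergy a c θ ε (p ε)).im) ~[𝓝[>] 0]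
      fun ε ↦ -(4 * Real.pi / (θ * a)) * ε * (p ε).im := by
  have hpath : Tendsto (fun ε ↦ (ε, p ε)) (𝓝[>] 0) (𝓝 0) :=
    (tendsto_id.prodMk hp).mono_right (nhdsGT_prod_nhds_le 0 0)
  have hexp := (isEquivalent_exp_im.comp_tendsto
    ((tendsto_mul_channelExponent (c := c) ha hθ).comp hpath)).neg
  have hcoeff : (fun ε ↦ -(4 * Real.pi / couplingDet a c θ ε)) ~[𝓝[>] 0]
      fun _ ↦ -(4 * Real.pi / (θ * a)) :=
    (isEquivalent_const_iff_tendsto (neg_ne_zero.2 (by positivity))).2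
      (tendsto_const_nhds.div tendsto_couplingDet (mul_ne_zero hθ ha)).neg
  have hscale := hcoeff.mul (IsEquivalent.refl (u := fun ε ↦ ε * (p ε).im))
  refine (hexp.congr_left ?_).trans ((hscale.congr_left ?_).congr_right ?_)
  · exact .of_forall fun ε ↦ by simp [channelEnergy]
  · refine .of_forall fun ε ↦ ?_
    simp only [Pi.mul_apply, Function.comp_apply, im_ofReal_mul, channelExponent_im]
    ring
  · exact .of_forall fun ε ↦ (mul_assoc _ _ _).symm

lemma isEquivalent_channelEnergy_im_of_eq_div (ha : a ≠ 0) (hθ : θ ≠ 0) (hc : c < 0)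
    (hp : Tendsto p (𝓝[>] 0) (𝓝 0))
    (hpF : ∀ᶠ ε in 𝓝[>] 0, p ε = ε / openChannelValue a c θ ε (p ε)) :
    (fun ε ↦ (channelEnergy a c θ ε (p ε)).im) ~[𝓝[>] 0]
      fun ε ↦ -(16 * Real.pi ^ 3 * ε ^ 2 / (a ^ 2 * θ ^ 2 * Real.log ε ^ 2)) := by
  refine (isEquivalent_channelEnergy_im ha hθ hp).trans <| (IsEquivalent.refl.mul
    (isEquivalent_im_of_eq_div ha hθ hc hp hpF)).congr_right (.of_forall fun ε ↦ ?_)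
  simp only [Pi.mul_apply]
  field

lemma eventually_width_pos (ha : a ≠ 0) (hθ : θ ≠ 0) :
    ∀ᶠ ε in 𝓝[>] 0, 0 < 16 * Real.pi ^ 3 * ε ^ 2 / (a ^ 2 * θ ^ 2 * Real.log ε ^ 2) := by
  filter_upwards [self_mem_nhdsWithin, Real.tendsto_log_nhdsGT_zero.eventually_ne_atBot 0]
    with ε hε hlog
  have hε' : 0 < ε := hε
  positivity

lemma isBigO_width :
    (fun ε ↦ 16 * Real.pi ^ 3 * ε ^ 2 / (a ^ 2 * θ ^ 2 * Real.log ε ^ 2)) =O[𝓝[>] 0]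
      fun ε ↦ ε ^ 2 / Real.log ε ^ 2 := by
  refine (isBigO_const_mul_self (16 * Real.pi ^ 3 / (a ^ 2 * θ ^ 2)) _ _).congr_left fun ε ↦ ?_
  exact div_mul_div_comm _ _ _ _

theorem exists_resonance (ha : a ≠ 0) (hθ : θ ≠ 0) (hc : c < 0) :
    ∃ E : ℝ → ℂ,
      (∀ᶠ ε : ℝ in 𝓝[>] 0,
        openChannel a c θ ε (E ε) * closedChannel a c θ ε (E ε) - (ε : ℂ) ^ 2 = 0) ∧
      (∀ᶠ ε in 𝓝[>] 0, (E ε).im < 0) ∧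
      (fun ε ↦ (E ε).re - 4 * Real.pi * |c| * ε / a ^ 2) =O[𝓝[>] 0] (fun ε ↦ ε ^ 2) ∧
      (fun ε ↦ (E ε).im + 16 * Real.pi ^ 3 * ε ^ 2 / (a ^ 2 * θ ^ 2 * Real.log ε ^ 2)) =o[𝓝[>] 0]
        fun ε ↦ ε ^ 2 / Real.log ε ^ 2 := by
  obtain ⟨p, hp, hpF⟩ := exists_tendsto_eq_div_openChannelValue ha hθ hc
  have him := isEquivalent_channelEnergy_im_of_eq_div ha hθ hc hp hpF
  refine ⟨fun ε ↦ channelEnergy a c θ ε (p ε), eventually_resonance_equation ha hθ hc hp hpF,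
    him.eventually_neg ((eventually_width_pos ha hθ).mono fun _ ↦ neg_neg_of_pos), ?_, ?_⟩
  · refine .trans (.of_norm_le fun ε ↦ ?_)
      (isBigO_channelEnergy_sub_of_eq_div ha hθ hc hp hpF).norm_left
    refine le_of_eq_of_le (congrArg norm ?_) (abs_re_le_norm _)
    rw [sub_re, re_mul_ofReal, ofReal_re, energySlope, abs_of_neg hc]
    ring
  · refine (him.isLittleO.trans_isBigO isBigO_width.neg_left).congr_left fun ε ↦ ?_
    exact sub_neg_eq_add _ _

end Resonance

theorem resonance_d2_general (a c θ₀ : ℝ) (ha : a ≠ 0) (hc : c < 0) (hθ : θ₀ ≠ 0) :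
    ∃ C > (0 : ℝ), ∃ ε₀ > (0 : ℝ), ∃ E : ℝ → ℂ,
      (∀ ε : ℝ, 0 < ε → ε < ε₀ →
        (((a + c * ε : ℝ) : ℂ) +
            ((θ₀ * (a + c * ε) - ε ^ 2 : ℝ) : ℂ) *
              (Complex.log (E ε) / (4 * Real.pi) - Complex.I / 4 - ((1 / a : ℝ) : ℂ))) *
          ((θ₀ : ℂ) +
            ((θ₀ * (a + c * ε) - ε ^ 2 : ℝ) : ℂ) *
              (Complex.log (1 - E ε) / (4 * Real.pi) - ((1 / a : ℝ) : ℂ))) -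
          ((ε : ℂ)) ^ 2 = 0 ∧
        (E ε).im < 0 ∧
        |(E ε).re - 4 * Real.pi * |c| * ε / a ^ 2| ≤ C * ε ^ 2) ∧
      (∀ δ > (0 : ℝ), ∃ ε₁ > (0 : ℝ), ∀ ε : ℝ, 0 < ε → ε < ε₁ → ε < ε₀ →
        |(E ε).im + 16 * Real.pi ^ 3 * ε ^ 2 / (a ^ 2 * θ₀ ^ 2 * (Real.log ε) ^ 2)| ≤
          δ * ε ^ 2 / (Real.log ε) ^ 2) := by
  obtain ⟨E, heq, hneg, hre, him⟩ := exists_resonance ha hθ hc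
  obtain ⟨C, hC, hre⟩ := hre.exists_pos
  obtain ⟨ε₀, hε₀, hsub⟩ := mem_nhdsGT_iff_exists_Ioo_subset.1 (heq.and (hneg.and hre.bound))
  refine ⟨C, hC, ε₀, hε₀, E, fun ε hε hlt ↦ ?_, fun δ hδ ↦ ?_⟩
  · simpa [openChannel, closedChannel, couplingDet] using hsub ⟨hε, hlt⟩
  · obtain ⟨ε₁, hε₁, hsub₁⟩ := mem_nhdsGT_iff_exists_Ioo_subset.1 (him.def hδ)
    refine ⟨ε₁, hε₁, fun ε hε hlt _ ↦ ?_⟩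
    rw [mul_div_assoc δ, ← Real.norm_of_nonneg (show 0 ≤ ε ^ 2 / Real.log ε ^ 2 by positivity)]
    exact hsub₁ ⟨hε, hlt⟩

lemma log_two_sub_eulerMascheroniConstant_pos :
    0 < Real.log 2 - Real.eulerMascheroniConstant := by
  linarith [Real.eulerMascheroniConstant_lt_two_thirds, Real.log_two_gt_d9]

/-- d = 2, c < 0, θ₀ ≠ 0: for small ε the analytically continued resolvent
denominator (principal logarithms) has a zero `E_ε^r` with negative imaginary
part, with `Re(E_ε^r) = 4π|c|ε/a² + O(ε²)` and
`Im(E_ε^r) = −16π³ε²/(a²θ₀²(ln ε)²) + o(ε²/(ln ε)²)`. -/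
theorem resonance_d2 (a c θ₀ : ℝ)
    (ha : a = 2 * Real.pi / (Real.log 2 - Real.eulerMascheroniConstant))
    (hc : c < 0) (hθ : θ₀ ≠ 0) :
    ∃ C > (0 : ℝ), ∃ ε₀ > (0 : ℝ), ∃ E : ℝ → ℂ,
      (∀ ε : ℝ, 0 < ε → ε < ε₀ →
        (((a + c * ε : ℝ) : ℂ) +
            ((θ₀ * (a + c * ε) - ε ^ 2 : ℝ) : ℂ) *
              (Complex.log (E ε) / (4 * Real.pi) - Complex.I / 4 - ((1 / a : ℝ) : ℂ))) *
          ((θ₀ : ℂ) +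
            ((θ₀ * (a + c * ε) - ε ^ 2 : ℝ) : ℂ) *
              (Complex.log (1 - E ε) / (4 * Real.pi) - ((1 / a : ℝ) : ℂ))) -
          ((ε : ℂ)) ^ 2 = 0 ∧
        (E ε).im < 0 ∧
        |(E ε).re - 4 * Real.pi * |c| * ε / a ^ 2| ≤ C * ε ^ 2) ∧
      (∀ δ > (0 : ℝ), ∃ ε₁ > (0 : ℝ), ∀ ε : ℝ, 0 < ε → ε < ε₁ → ε < ε₀ →
        |(E ε).im + 16 * Real.pi ^ 3 * ε ^ 2 / (a ^ 2 * θ₀ ^ 2 * (Real.log ε) ^ 2)| ≤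
          δ * ε ^ 2 / (Real.log ε) ^ 2) := by
  subst ha
  exact resonance_d2_general _ c θ₀
    (div_pos Real.two_pi_pos log_two_sub_eulerMascheroniConstant_pos).ne' hc hθ
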